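/- For positive definite n×n matrices ρ, σ and α ∈ (1, 2], the map (ρ,σ) ↦ (tr((σ^{(1−α)/(2α)} ρ σ^{(1−α)/(2α)})^α))^{1/(α−1)} is jointly convex on pairs of positive definite matrices with fixed tr(ρ) = t. -/

import Mathlib

open Matrix ComplexOrder

/-- Functional calculus for Hermitian matrices: apply `f` to the eigenvalues. -/
noncomputable def mfun {m : Type*} [Fintype m] [DecidableEq m] (f : ℝ → ℝ)
    (A : Matrix m m ℂ) : Matrix m m ℂ :=
  if hA : A.IsHermitian then
    (hA.eigenvectorUnitary : Matrix m m ℂ) *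
      Matrix.diagonal (fun i => (f (hA.eigenvalues i) : ℂ)) *
      (star (hA.eigenvectorUnitary : Matrix m m ℂ))
  else 0

/-- Real matrix power via the functional calculus. -/
noncomputable def mpow {m : Type*} [Fintype m] [DecidableEq m]
    (A : Matrix m m ℂ) (p : ℝ) : Matrix m m ℂ :=
  mfun (fun x => x ^ p) A

/-!
Represent `a ^ (1 - r) * b ^ r` as an integral over `l > 0` of multiples of `a * b / (l * a + b)`.
Each of these kernels gives the quadratic form of a parallel sum, an infimum of functions linear in
`(A, B)`; hence Lieb's theorem: `tr (Kᴴ A^(1-r) K B^r)` is jointly concave. Together with Young's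
inequality for traces it yields Epstein's theorem: `tr (Kᴴ A^(1/p) K)^p` is concave in `A` for
`1 < p`. For conjugate exponents `α` and `β`, Legendre duality then exhibits
`α⁻¹ tr (σ^((1-α)/(2α)) ρ σ^((1-α)/(2α)))^α` as the supremum over `K` of
`tr (ρ K Kᴴ) - β⁻¹ tr (Kᴴ σ^(1/β) K)^β`, which is linear in `ρ` and convex in `σ`. Finally
`x ↦ x ^ (1 / (α - 1))` is increasing and convex on `[0, ∞)`.
-/

open MeasureTheory Set

section Convexity

variable {ι E : Type*} [AddCommGroup E] [Module ℝ E] {s : Set E} {f : E → ℝ} {F : ι → E → ℝ}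

theorem concaveOn_of_isGLB [Nonempty ι] (hF : ∀ i, ConcaveOn ℝ s (F i))
    (hf : ∀ x ∈ s, IsGLB (range fun i => F i x) (f x)) : ConcaveOn ℝ s f := by
  have hs : Convex ℝ s := (hF (Classical.arbitrary ι)).1
  refine ⟨hs, fun x hx y hy a b ha hb hab => ?_⟩
  refine (hf _ (hs hx hy ha hb hab)).2 (forall_mem_range.2 fun i => ?_)
  have hxi : f x ≤ F i x := (hf x hx).1 (mem_range_self i)
  have hyi : f y ≤ F i y := (hf y hy).1 (mem_range_self i)
  calc a • f x + b • f y ≤ a • F i x + b • F i y := by gcongr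
    _ ≤ F i (a • x + b • y) := (hF i).2 hx hy ha hb hab

theorem convexOn_of_isLUB [Nonempty ι] (hF : ∀ i, ConvexOn ℝ s (F i))
    (hf : ∀ x ∈ s, IsLUB (range fun i => F i x) (f x)) : ConvexOn ℝ s f := by
  refine neg_concaveOn_iff.1 (concaveOn_of_isGLB (fun i => (hF i).neg) fun x hx => ?_)
  have hneg : (range fun i => (-F i) x) = -range fun i => F i x := by
    simp [← image_neg_eq_neg, ← range_comp, Function.comp_def]
  rw [hneg]
  exact (hf x hx).neg

theorem convexOn_rpow_comp {p : ℝ} (hp : 1 ≤ p) (hf : ConvexOn ℝ s f) (hf0 : ∀ x ∈ s, 0 ≤ f x) :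
    ConvexOn ℝ s fun x => f x ^ p := by
  refine ⟨hf.1, fun x hx y hy a b ha hb hab => ?_⟩
  calc f (a • x + b • y) ^ p ≤ (a • f x + b • f y) ^ p :=
        Real.rpow_le_rpow (hf0 _ (hf.1 hx hy ha hb hab)) (hf.2 hx hy ha hb hab) (by positivity)
    _ ≤ a • f x ^ p + b • f y ^ p := (convexOn_rpow hp).2 (hf0 x hx) (hf0 y hy) ha hb hab

theorem convex_setOf_posSemidef {n : Type*} : Convex ℝ {A : Matrix n n ℂ | A.PosSemidef} :=
  fun _ hA _ hB _ _ ha hb _ => (hA.smul ha).add (hB.smul hb)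

theorem convex_setOf_posDef {n : Type*} : Convex ℝ {A : Matrix n n ℂ | A.PosDef} :=
  convex_iff_forall_pos.2 fun _ hA _ hB _ _ ha hb _ => (hA.smul ha).add (hB.smul hb)

end Convexity

section Scalar

-- Completing the square in `m`.
theorem normSq_mul_add_inv_mul_normSq_sub_mul (k m : ℂ) {a b l : ℝ} (ha : 0 ≤ a) (hb : 0 ≤ b)
    (hl : 0 < l) :
    Complex.normSq m * a + l⁻¹ * (Complex.normSq (k - m) * b) =
      Complex.normSq k * (a * b / (l * a + b)) +
        l⁻¹ * (l * a + b) * Complex.normSq (m - k * (b / (l * a + b) : ℝ)) := by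
  rcases (add_nonneg (mul_nonneg hl.le ha) hb).eq_or_lt' with h0 | hpos
  · obtain ⟨rfl, rfl⟩ : a = 0 ∧ b = 0 := by
      constructor <;> nlinarith [mul_nonneg hl.le ha]
    simp
  · simp only [Complex.normSq_apply, Complex.sub_re, Complex.sub_im, Complex.re_mul_ofReal,
      Complex.im_mul_ofReal]
    generalize hd : l * a + b = d at hpos ⊢
    obtain rfl : b = d - l * a := by rw [← hd]; ring
    field_simp
    ring

theorem exists_measure_rpow_mul_rpow_eq_integral {r : ℝ} (hr : r ∈ Ioo (0 : ℝ) 1) :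
    ∃ μ : Measure ℝ, ∀ a b : ℝ, 0 ≤ a → 0 ≤ b →
      IntegrableOn (fun l => l ^ (r - 1) * (a * b / (l * a + b))) (Ioi 0) μ ∧
      a ^ (1 - r) * b ^ r = ∫ l in Ioi 0, l ^ (r - 1) * (a * b / (l * a + b)) ∂μ := by
  obtain ⟨μ, hμ⟩ := Real.exists_measure_rpow_eq_integral_rpowIntegrand₀₁ hr
  refine ⟨μ, fun a b ha hb => ?_⟩
  have hba : 0 ≤ b / a := div_nonneg hb ha
  have hcongr : EqOn (fun l => a * Real.rpowIntegrand₀₁ r l (b / a))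
      (fun l => l ^ (r - 1) * (a * b / (l * a + b))) (Ioi 0) := fun l hl => by
    rcases ha.eq_or_lt with rfl | ha
    · simp
    · have hl : 0 < l := hl
      simp only [Real.rpowIntegrand₀₁_eq_pow_div hr hl.le hba]
      field_simp
  have hrpow : a ^ (1 - r) * b ^ r = a * (b / a) ^ r := by
    rcases ha.eq_or_lt with rfl | ha
    · simp [Real.zero_rpow (sub_pos.2 hr.2).ne']
    · rw [Real.div_rpow hb ha.le, Real.rpow_sub ha, Real.rpow_one]
      ring
  obtain ⟨hint, heq⟩ := hμ (b / a) hba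
  refine ⟨IntegrableOn.congr_fun (hint.const_mul a) hcongr measurableSet_Ioi, ?_⟩
  rw [hrpow, heq, ← integral_const_mul, setIntegral_congr_fun measurableSet_Ioi hcongr]

end Scalar

section FunctionalCalculus

variable {n : Type*} [Fintype n] [DecidableEq n] {A : Matrix n n ℂ}

theorem mfun_eq_cfc (f : ℝ → ℝ) (A : Matrix n n ℂ) : mfun f A = cfc f A := by
  by_cases hA : A.IsHermitian
  · rw [hA.cfc_eq, mfun, dif_pos hA]
    simp [Matrix.IsHermitian.cfc, Unitary.conjStarAlgAut_apply, Function.comp_def]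
  · rw [mfun, dif_neg hA]
    exact (cfc_apply_of_not_predicate A hA).symm

theorem isHermitian_mfun (f : ℝ → ℝ) (A : Matrix n n ℂ) : (mfun f A).IsHermitian := by
  rw [mfun_eq_cfc]
  exact cfc_predicate f A

theorem mfun_mul_mfun (f g : ℝ → ℝ) (A : Matrix n n ℂ) :
    mfun f A * mfun g A = mfun (fun x => f x * g x) A := by
  simp only [mfun_eq_cfc]
  exact (cfc_mul f g A (Matrix.finite_real_spectrum.continuousOn f)
    (Matrix.finite_real_spectrum.continuousOn g)).symm

theorem mfun_mfun (hA : A.IsHermitian) (f g : ℝ → ℝ) :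
    mfun g (mfun f A) = mfun (fun x => g (f x)) A := by
  simp only [mfun_eq_cfc]
  exact (cfc_comp' g f A ((Matrix.finite_real_spectrum.image f).continuousOn g)
    (Matrix.finite_real_spectrum.continuousOn f) hA.isSelfAdjoint).symm

theorem mfun_congr (hA : A.IsHermitian) {f g : ℝ → ℝ}
    (h : ∀ i, f (hA.eigenvalues i) = g (hA.eigenvalues i)) : mfun f A = mfun g A := by
  simp only [mfun, dif_pos hA, h]

theorem mfun_one (hA : A.IsHermitian) : mfun (fun _ => 1) A = 1 := by
  simp [mfun, dif_pos hA]

theorem mfun_id (hA : A.IsHermitian) : mfun (fun x => x) A = A := by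
  rw [mfun_eq_cfc]
  exact cfc_id' ℝ A hA.isSelfAdjoint

theorem posSemidef_mfun (hA : A.PosSemidef) {f : ℝ → ℝ} (hf : ∀ x, 0 ≤ x → 0 ≤ f x) :
    (mfun f A).PosSemidef := by
  rw [mfun, dif_pos hA.1]
  refine Matrix.PosSemidef.mul_mul_conjTranspose_same (.diagonal fun i => ?_) _
  simpa using hf _ (hA.eigenvalues_nonneg i)

theorem re_trace_mfun (hA : A.IsHermitian) (f : ℝ → ℝ) :
    (mfun f A).trace.re = ∑ i, f (hA.eigenvalues i) := by
  rw [mfun, dif_pos hA, Matrix.trace_mul_comm, ← mul_assoc]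
  simp [Matrix.trace_diagonal]

theorem re_trace_mfun_mul_conjTranspose_self (f : ℝ → ℝ) (C : Matrix n n ℂ) :
    (mfun f (C * Cᴴ)).trace.re = (mfun f (Cᴴ * C)).trace.re := by
  have h₁ := Matrix.isHermitian_mul_conjTranspose_self C
  have h₂ := Matrix.isHermitian_conjTranspose_mul_self C
  rw [re_trace_mfun h₁, re_trace_mfun h₂,
    (Matrix.IsHermitian.eigenvalues_eq_eigenvalues_iff h₁ h₂).2 (Matrix.charpoly_mul_comm _ _)]

theorem isHermitian_mpow (A : Matrix n n ℂ) (p : ℝ) : (mpow A p).IsHermitian :=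
  isHermitian_mfun _ A

theorem posSemidef_mpow (hA : A.PosSemidef) (p : ℝ) : (mpow A p).PosSemidef :=
  posSemidef_mfun hA fun _ hx => Real.rpow_nonneg hx p

theorem re_trace_mpow_nonneg (hA : A.PosSemidef) (p : ℝ) : 0 ≤ (mpow A p).trace.re :=
  (Complex.nonneg_iff.1 (posSemidef_mpow hA p).trace_nonneg).1

theorem mpow_one (hA : A.IsHermitian) : mpow A 1 = A := by
  simpa only [mpow, Real.rpow_one] using mfun_id hA

theorem mpow_mul_mpow (hA : A.PosSemidef) {p q : ℝ} (hpq : p + q ≠ 0) :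
    mpow A p * mpow A q = mpow A (p + q) := by
  rw [mpow, mpow, mpow, mfun_mul_mfun]
  exact mfun_congr hA.1 fun i => (Real.rpow_add' (hA.eigenvalues_nonneg i) hpq).symm

theorem mpow_mul_mpow_neg (hA : A.PosDef) (p : ℝ) : mpow A p * mpow A (-p) = 1 := by
  rw [mpow, mpow, mfun_mul_mfun, ← mfun_one hA.1]
  refine mfun_congr hA.1 fun i => ?_
  rw [← Real.rpow_add (hA.eigenvalues_pos i), add_neg_cancel, Real.rpow_zero]

theorem mpow_mpow (hA : A.PosSemidef) (p q : ℝ) : mpow (mpow A p) q = mpow A (p * q) := by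
  rw [mpow, mpow, mpow, mfun_mfun hA.1]
  exact mfun_congr hA.1 fun i => (Real.rpow_mul (hA.eigenvalues_nonneg i) p q).symm

theorem mul_mpow_sub_one (hA : A.PosSemidef) {p : ℝ} (hp : p ≠ 0) :
    A * mpow A (p - 1) = mpow A p := by
  have h := mpow_mul_mpow hA (p := 1) (q := p - 1) (by simpa using hp)
  rwa [mpow_one hA.1, add_sub_cancel] at h

end FunctionalCalculus

section SpectralForm

variable {m n : Type*} [Fintype m] [DecidableEq m] [Fintype n] [DecidableEq n]
  {A : Matrix m m ℂ} {B : Matrix n n ℂ}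

/-- The matrix of `K` in the eigenbases of `B` (columns) and `A` (rows): in these coordinates left
multiplication by `A` and right multiplication by `B` are simultaneously diagonal. -/
noncomputable def eigenbasisMatrix (hA : A.IsHermitian) (hB : B.IsHermitian)
    (K : Matrix m n ℂ) : Matrix m n ℂ :=
  star (hA.eigenvectorUnitary : Matrix m m ℂ) * K * (hB.eigenvectorUnitary : Matrix n n ℂ)

/-- The quadratic form `⟨K, φ(L_A, R_B) K⟩` for the Hilbert–Schmidt inner product, where `L_A` and
`R_B` are the commuting operators of left multiplication by `A` and right multiplication by `B`.
It carries scalar inequalities and integral formulas for `φ` over to traces of matrices. -/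
noncomputable def spectralForm (hA : A.IsHermitian) (hB : B.IsHermitian) (K : Matrix m n ℂ)
    (φ : ℝ → ℝ → ℝ) : ℝ :=
  ∑ i, ∑ j, Complex.normSq (eigenbasisMatrix hA hB K i j) *
    φ (hA.eigenvalues i) (hB.eigenvalues j)

theorem eigenbasisMatrix_sub (hA : A.IsHermitian) (hB : B.IsHermitian) (K M : Matrix m n ℂ) :
    eigenbasisMatrix hA hB (K - M) = eigenbasisMatrix hA hB K - eigenbasisMatrix hA hB M := by
  simp only [eigenbasisMatrix, Matrix.mul_sub, Matrix.sub_mul]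

theorem eigenbasisMatrix_surjective (hA : A.IsHermitian) (hB : B.IsHermitian) :
    Function.Surjective (eigenbasisMatrix hA hB) := fun W => by
  refine ⟨(hA.eigenvectorUnitary : Matrix m m ℂ) * W *
    star (hB.eigenvectorUnitary : Matrix n n ℂ), ?_⟩
  simp only [eigenbasisMatrix, Matrix.mul_assoc, Unitary.coe_star_mul_self, Matrix.mul_one]
  rw [← Matrix.mul_assoc, Unitary.coe_star_mul_self, Matrix.one_mul]

theorem re_trace_mul_mfun_mul_mfun (hA : A.IsHermitian) (hB : B.IsHermitian) (K : Matrix m n ℂ)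
    (f g : ℝ → ℝ) :
    (Kᴴ * mfun f A * K * mfun g B).trace.re = spectralForm hA hB K fun x y => f x * g y := by
  set W := eigenbasisMatrix hA hB K with hW
  have hdiag : (Kᴴ * mfun f A * K * mfun g B).trace =
      (Wᴴ * (diagonal (fun i => (f (hA.eigenvalues i) : ℂ)) * W *
        diagonal (fun j => (g (hB.eigenvalues j) : ℂ)))).trace := by
    rw [mfun, dif_pos hA, mfun, dif_pos hB, hW, eigenbasisMatrix]
    simp only [conjTranspose_mul, star_eq_conjTranspose, conjTranspose_conjTranspose,
      ← Matrix.mul_assoc]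
    rw [trace_mul_comm]
    simp only [← Matrix.mul_assoc]
  rw [hdiag, trace, spectralForm, Finset.sum_comm]
  simp only [diag_apply, mul_apply (M := Wᴴ), mul_diagonal, diagonal_mul, conjTranspose_apply,
    Complex.re_sum]
  refine Finset.sum_congr rfl fun j _ => Finset.sum_congr rfl fun i _ => ?_
  simp only [Complex.normSq_apply, RCLike.star_def, Complex.mul_re, Complex.conj_re,
    Complex.ofReal_re, Complex.ofReal_im, Complex.mul_im, Complex.conj_im, ← hW]
  ring

theorem re_trace_mul_mfun_mul (hA : A.IsHermitian) (hB : B.IsHermitian) (K : Matrix m n ℂ)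
    (f : ℝ → ℝ) : (Kᴴ * mfun f A * K).trace.re = spectralForm hA hB K fun x _ => f x := by
  simpa only [mfun_one hB, Matrix.mul_one, mul_one] using
    re_trace_mul_mfun_mul_mfun hA hB K f fun _ => 1

theorem re_trace_mul_mul_mfun (hA : A.IsHermitian) (hB : B.IsHermitian) (K : Matrix m n ℂ)
    (g : ℝ → ℝ) : (Kᴴ * K * mfun g B).trace.re = spectralForm hA hB K fun _ y => g y := by
  simpa only [mfun_one hA, Matrix.mul_one, one_mul] using
    re_trace_mul_mfun_mul_mfun hA hB K (fun _ => 1) g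

theorem spectralForm_mono (hA : A.PosSemidef) (hB : B.PosSemidef) (K : Matrix m n ℂ)
    {φ ψ : ℝ → ℝ → ℝ} (h : ∀ x y, 0 ≤ x → 0 ≤ y → φ x y ≤ ψ x y) :
    spectralForm hA.1 hB.1 K φ ≤ spectralForm hA.1 hB.1 K ψ :=
  Finset.sum_le_sum fun i _ => Finset.sum_le_sum fun j _ =>
    mul_le_mul_of_nonneg_left (h _ _ (hA.eigenvalues_nonneg i) (hB.eigenvalues_nonneg j))
      (Complex.normSq_nonneg _)

variable {X : Type*} [MeasurableSpace X] {μ : Measure X} {φ : X → ℝ → ℝ → ℝ}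

theorem integrable_spectralForm (hA : A.PosSemidef) (hB : B.PosSemidef) (K : Matrix m n ℂ)
    (hφ : ∀ a b, 0 ≤ a → 0 ≤ b → Integrable (fun x => φ x a b) μ) :
    Integrable (fun x => spectralForm hA.1 hB.1 K (φ x)) μ :=
  integrable_finsetSum _ fun i _ => integrable_finsetSum _ fun j _ =>
    (hφ _ _ (hA.eigenvalues_nonneg i) (hB.eigenvalues_nonneg j)).const_mul _

theorem integral_spectralForm (hA : A.PosSemidef) (hB : B.PosSemidef) (K : Matrix m n ℂ)
    (hφ : ∀ a b, 0 ≤ a → 0 ≤ b → Integrable (fun x => φ x a b) μ) :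
    ∫ x, spectralForm hA.1 hB.1 K (φ x) ∂μ =
      spectralForm hA.1 hB.1 K fun a b => ∫ x, φ x a b ∂μ := by
  have hint (i : m) (j : n) := (hφ _ _ (hA.eigenvalues_nonneg i)
    (hB.eigenvalues_nonneg j)).const_mul (Complex.normSq (eigenbasisMatrix hA.1 hB.1 K i j))
  simp only [spectralForm]
  rw [integral_finsetSum _ fun i _ => integrable_finsetSum _ fun j _ => hint i j]
  refine Finset.sum_congr rfl fun i _ => ?_
  rw [integral_finsetSum _ fun j _ => hint i j]
  exact Finset.sum_congr rfl fun j _ => integral_const_mul _ _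

end SpectralForm

section ParallelSum

variable {m n : Type*} [Fintype m] [Fintype n] {A : Matrix m m ℂ} {B : Matrix n n ℂ}

/-- The cost of splitting `K` as `M + (K - M)`, where the first part is measured by left
multiplication by `A` and the second by `l⁻¹` times right multiplication by `B`. -/
noncomputable def parallelCost (A : Matrix m m ℂ) (B : Matrix n n ℂ) (K : Matrix m n ℂ) (l : ℝ)
    (M : Matrix m n ℂ) : ℝ :=
  (Mᴴ * A * M).trace.re + l⁻¹ * ((K - M)ᴴ * (K - M) * B).trace.re

/-- The quadratic form at `K` of the parallel sum `(X⁻¹ + Y⁻¹)⁻¹` of `X = L_A` and `Y = l⁻¹ R_B`,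
in the variational form that makes sense for singular `A` and `B`. For `0 < l` and positive
semidefinite `A` and `B` the costs are nonnegative, so this is a true infimum. -/
noncomputable def parallelForm (A : Matrix m m ℂ) (B : Matrix n n ℂ) (K : Matrix m n ℂ) (l : ℝ) :
    ℝ :=
  ⨅ M, parallelCost A B K l M

theorem concaveOn_parallelCost {s : Set (Matrix m m ℂ × Matrix n n ℂ)} (hs : Convex ℝ s)
    (K M : Matrix m n ℂ) (l : ℝ) : ConcaveOn ℝ s fun p => parallelCost p.1 p.2 K l M := by
  refine ⟨hs, fun p _ p' _ a b _ _ _ => le_of_eq ?_⟩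
  simp only [parallelCost, Prod.fst_add, Prod.snd_add, Prod.smul_fst, Prod.smul_snd,
    Matrix.mul_add, Matrix.add_mul, Matrix.mul_smul, Matrix.smul_mul, trace_add, trace_smul,
    Complex.add_re, Complex.smul_re, smul_eq_mul]
  ring

section SpectralDecomposition

variable [DecidableEq m] [DecidableEq n]

theorem parallelCost_eq_spectralForm_add (hA : A.PosSemidef) (hB : B.PosSemidef)
    (K M : Matrix m n ℂ) {l : ℝ} (hl : 0 < l) :
    parallelCost A B K l M = (spectralForm hA.1 hB.1 K fun a b => a * b / (l * a + b)) +
      ∑ i, ∑ j, l⁻¹ * (l * hA.1.eigenvalues i + hB.1.eigenvalues j) *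
        Complex.normSq (eigenbasisMatrix hA.1 hB.1 M i j - eigenbasisMatrix hA.1 hB.1 K i j *
          (hB.1.eigenvalues j / (l * hA.1.eigenvalues i + hB.1.eigenvalues j) : ℝ)) := by
  have hM := re_trace_mul_mfun_mul hA.1 hB.1 M fun x => x
  have hKM := re_trace_mul_mul_mfun hA.1 hB.1 (K - M) fun x => x
  rw [mfun_id hA.1] at hM
  rw [mfun_id hB.1] at hKM
  rw [parallelCost, hM, hKM]
  simp only [spectralForm, eigenbasisMatrix_sub, Matrix.sub_apply, Finset.mul_sum,
    ← Finset.sum_add_distrib]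
  exact Finset.sum_congr rfl fun i _ => Finset.sum_congr rfl fun j _ =>
    normSq_mul_add_inv_mul_normSq_sub_mul _ _ (hA.eigenvalues_nonneg i) (hB.eigenvalues_nonneg j)
      hl

theorem isLeast_parallelCost (hA : A.PosSemidef) (hB : B.PosSemidef) (K : Matrix m n ℂ) {l : ℝ}
    (hl : 0 < l) :
    IsLeast (range (parallelCost A B K l))
      (spectralForm hA.1 hB.1 K fun a b => a * b / (l * a + b)) := by
  constructor
  · obtain ⟨M, hM⟩ := eigenbasisMatrix_surjective hA.1 hB.1 (of fun i j =>
      eigenbasisMatrix hA.1 hB.1 K i j *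
        (hB.1.eigenvalues j / (l * hA.1.eigenvalues i + hB.1.eigenvalues j) : ℝ))
    refine ⟨M, ?_⟩
    simp [parallelCost_eq_spectralForm_add hA hB K M hl, hM]
  · refine forall_mem_range.2 fun M => ?_
    rw [parallelCost_eq_spectralForm_add hA hB K M hl]
    refine le_add_of_nonneg_right (Finset.sum_nonneg fun i _ => Finset.sum_nonneg fun j _ => ?_)
    have ha : 0 ≤ hA.1.eigenvalues i := hA.eigenvalues_nonneg i
    have hb : 0 ≤ hB.1.eigenvalues j := hB.eigenvalues_nonneg j
    exact mul_nonneg (by positivity) (Complex.normSq_nonneg _)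

theorem parallelForm_eq_spectralForm (hA : A.PosSemidef) (hB : B.PosSemidef) (K : Matrix m n ℂ)
    {l : ℝ} (hl : 0 < l) :
    parallelForm A B K l = spectralForm hA.1 hB.1 K fun a b => a * b / (l * a + b) :=
  (isLeast_parallelCost hA hB K hl).csInf_eq

end SpectralDecomposition

theorem concaveOn_parallelForm (K : Matrix m n ℂ) {l : ℝ} (hl : 0 < l) :
    ConcaveOn ℝ ({A : Matrix m m ℂ | A.PosSemidef} ×ˢ {B : Matrix n n ℂ | B.PosSemidef})
      fun p => parallelForm p.1 p.2 K l := by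
  classical
  refine concaveOn_of_isGLB (fun M => concaveOn_parallelCost
    (convex_setOf_posSemidef.prod convex_setOf_posSemidef) K M l) fun p hp => ?_
  rw [parallelForm_eq_spectralForm hp.1 hp.2 K hl]
  exact (isLeast_parallelCost hp.1 hp.2 K hl).isGLB

end ParallelSum

section Lieb

variable {m n : Type*} [Fintype m] [DecidableEq m] [Fintype n] [DecidableEq n]

theorem concaveOn_re_trace_mul_mpow_mul_mpow (K : Matrix m n ℂ) {r : ℝ} (hr : r ∈ Ioo (0 : ℝ) 1) :
    ConcaveOn ℝ ({A : Matrix m m ℂ | A.PosSemidef} ×ˢ {B : Matrix n n ℂ | B.PosSemidef})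
      fun p => (Kᴴ * mpow p.1 (1 - r) * K * mpow p.2 r).trace.re := by
  obtain ⟨μ, hμ⟩ := exists_measure_rpow_mul_rpow_eq_integral hr
  have hint (a b : ℝ) (ha : 0 ≤ a) (hb : 0 ≤ b) := (hμ a b ha hb).1
  have hform {A : Matrix m m ℂ} {B : Matrix n n ℂ} (hA : A.PosSemidef) (hB : B.PosSemidef) :
      EqOn (fun l => spectralForm hA.1 hB.1 K fun a b => l ^ (r - 1) * (a * b / (l * a + b)))
        (fun l => l ^ (r - 1) * parallelForm A B K l) (Ioi 0) := fun l hl => by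
    simp only [parallelForm_eq_spectralForm hA hB K hl, spectralForm, Finset.mul_sum]
    exact Finset.sum_congr rfl fun i _ => Finset.sum_congr rfl fun j _ => mul_left_comm _ _ _
  have hconc : ConcaveOn ℝ
      ({A : Matrix m m ℂ | A.PosSemidef} ×ˢ {B : Matrix n n ℂ | B.PosSemidef})
      fun p => ∫ l in Ioi 0, l ^ (r - 1) * parallelForm p.1 p.2 K l ∂μ := by
    refine integral_concaveOn_of_integrand_ae
      (convex_setOf_posSemidef.prod convex_setOf_posSemidef) ?_ fun p hp =>
      (integrable_spectralForm hp.1 hp.2 K hint).congr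
        ((ae_restrict_mem measurableSet_Ioi).mono (hform hp.1 hp.2))
    filter_upwards [ae_restrict_mem measurableSet_Ioi] with l hl
    exact (concaveOn_parallelForm K hl).smul (Real.rpow_nonneg (le_of_lt hl) _)
  refine hconc.congr fun p hp => ?_
  dsimp only
  rw [← setIntegral_congr_fun measurableSet_Ioi (hform hp.1 hp.2),
    integral_spectralForm hp.1 hp.2 K hint, mpow, mpow, re_trace_mul_mfun_mul_mfun hp.1.1 hp.2.1]
  exact Finset.sum_congr rfl fun i _ => Finset.sum_congr rfl fun j _ => congrArg _
    (hμ _ _ (hp.1.eigenvalues_nonneg i) (hp.2.eigenvalues_nonneg j)).2.symm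

end Lieb

section Epstein

variable {m n : Type*} [Fintype m] [DecidableEq m] [Fintype n] [DecidableEq n] {p q : ℝ}

theorem re_trace_mul_le (hpq : p.HolderConjugate q) {X Y : Matrix n n ℂ} (hX : X.PosSemidef)
    (hY : Y.PosSemidef) :
    (X * Y).trace.re ≤ (mpow X p).trace.re / p + (mpow Y q).trace.re / q := by
  have hXY := re_trace_mul_mfun_mul_mfun hX.1 hY.1 1 (fun x => x) fun y => y
  have hXp := re_trace_mul_mfun_mul hX.1 hY.1 1 fun x => x ^ p
  have hYq := re_trace_mul_mul_mfun hX.1 hY.1 1 fun y => y ^ q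
  simp only [conjTranspose_one, Matrix.one_mul, Matrix.mul_one] at hXY hXp hYq
  rw [mfun_id hX.1, mfun_id hY.1] at hXY
  rw [mpow, mpow, hXY, hXp, hYq]
  calc spectralForm hX.1 hY.1 1 (fun x y => x * y)
      ≤ spectralForm hX.1 hY.1 1 fun x y => x ^ p / p + y ^ q / q :=
        spectralForm_mono hX hY 1 fun x y hx hy => Real.young_inequality_of_nonneg hx hy hpq
    _ = _ := by simp only [spectralForm, mul_add, mul_div_assoc', Finset.sum_add_distrib,
        Finset.sum_div]

theorem re_trace_mul_mpow_inv_le (hpq : p.HolderConjugate q) {X Y : Matrix n n ℂ}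
    (hX : X.PosSemidef) (hY : Y.PosSemidef) :
    (X * mpow Y q⁻¹).trace.re ≤ (mpow X p).trace.re / p + Y.trace.re / q := by
  have h := re_trace_mul_le hpq hX (posSemidef_mpow hY q⁻¹)
  rwa [mpow_mpow hY, inv_mul_cancel₀ hpq.symm.ne_zero, mpow_one hY.1] at h

theorem mul_mpow_mpow_inv (hpq : p.HolderConjugate q) {X : Matrix n n ℂ} (hX : X.PosSemidef) :
    X * mpow (mpow X p) q⁻¹ = mpow X p := by
  rw [mpow_mpow hX, ← div_eq_mul_inv, hpq.div_conj_eq_sub_one, mul_mpow_sub_one hX hpq.ne_zero]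

-- With `X A = Kᴴ A^(1/p) K`, the bound `p tr (X A * Y^(1/q)) - (p/q) tr Y ≤ tr (X A)^p` is attained
-- at `Y = (X A)^p`, and its left-hand side is jointly concave in `(A, Y)`.
theorem concaveOn_re_trace_mpow_conj (hpq : p.HolderConjugate q) (K : Matrix m n ℂ) :
    ConcaveOn ℝ {A : Matrix m m ℂ | A.PosSemidef}
      fun A => (mpow (Kᴴ * mpow A p⁻¹ * K) p).trace.re := by
  refine ⟨convex_setOf_posSemidef, fun A₀ hA₀ A₁ hA₁ a b ha hb hab => ?_⟩
  set X : Matrix m m ℂ → Matrix n n ℂ := fun A => Kᴴ * mpow A p⁻¹ * K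
  set f : Matrix m m ℂ → ℝ := fun A => (mpow (X A) p).trace.re
  set A : Matrix m m ℂ := a • A₀ + b • A₁
  set Y : Matrix n n ℂ := a • mpow (X A₀) p + b • mpow (X A₁) p
  have hX {A : Matrix m m ℂ} (hA : A.PosSemidef) : (X A).PosSemidef :=
    (posSemidef_mpow hA _).conjTranspose_mul_mul_same K
  have hY₀ : (mpow (X A₀) p).PosSemidef := posSemidef_mpow (hX hA₀) p
  have hY₁ : (mpow (X A₁) p).PosSemidef := posSemidef_mpow (hX hA₁) p
  have hYtrace : Y.trace.re = a * f A₀ + b * f A₁ := by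
    simp [Y, f, trace_add, trace_smul]
  have hlieb : a * f A₀ + b * f A₁ ≤ (X A * mpow Y q⁻¹).trace.re := by
    have h := (concaveOn_re_trace_mul_mpow_mul_mpow K
      ⟨hpq.symm.inv_pos, inv_lt_one_of_one_lt₀ hpq.symm.lt⟩).2 (x := (A₀, mpow (X A₀) p))
      (y := (A₁, mpow (X A₁) p)) ⟨hA₀, hY₀⟩ ⟨hA₁, hY₁⟩ ha hb hab
    rw [hpq.symm.one_sub_inv] at h
    calc a * f A₀ + b * f A₁
        = a * (X A₀ * mpow (mpow (X A₀) p) q⁻¹).trace.re +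
            b * (X A₁ * mpow (mpow (X A₁) p) q⁻¹).trace.re := by
          rw [mul_mpow_mpow_inv hpq (hX hA₀), mul_mpow_mpow_inv hpq (hX hA₁)]
      _ ≤ (X A * mpow Y q⁻¹).trace.re := h
  have hyoung : (X A * mpow Y q⁻¹).trace.re ≤ f A / p + (a * f A₀ + b * f A₁) / q :=
    hYtrace ▸ re_trace_mul_mpow_inv_le hpq (hX (convex_setOf_posSemidef hA₀ hA₁ ha hb hab))
      (convex_setOf_posSemidef hY₀ hY₁ ha hb hab)
  refine (div_le_div_iff_of_pos_right hpq.pos).1 ?_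
  calc (a * f A₀ + b * f A₁) / p = a * f A₀ + b * f A₁ - (a * f A₀ + b * f A₁) / q := by
        rw [div_eq_mul_inv, div_eq_mul_inv, ← hpq.one_sub_inv]
        ring
    _ ≤ f A / p := by linarith

end Epstein

section SandwichedTrace

variable {n : Type*} [Fintype n] [DecidableEq n] {α β : ℝ} {ρ σ : Matrix n n ℂ}

theorem isGreatest_re_trace_mul_sub (hαβ : α.HolderConjugate β) (hρ : ρ.PosSemidef) :
    IsGreatest
      (range fun L : Matrix n n ℂ => (ρ * (L * Lᴴ)).trace.re - (mpow (Lᴴ * L) β).trace.re / β)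
      ((mpow ρ α).trace.re / α) := by
  constructor
  · have hα : 0 < α - 1 := sub_pos.2 hαβ.lt
    have hsq : mpow ρ ((α - 1) / 2) * mpow ρ ((α - 1) / 2) = mpow ρ (α - 1) := by
      rw [mpow_mul_mpow hρ (by linarith), add_halves]
    refine ⟨mpow ρ ((α - 1) / 2), ?_⟩
    dsimp only
    rw [(isHermitian_mpow ρ _).eq, hsq, mul_mpow_sub_one hρ hαβ.ne_zero, mpow_mpow hρ,
      hαβ.sub_one_mul_conj, div_eq_mul_inv, div_eq_mul_inv, ← mul_one_sub,
      hαβ.symm.one_sub_inv]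
  · refine forall_mem_range.2 fun L => sub_le_iff_le_add.2 ?_
    rw [mpow, mpow, ← re_trace_mfun_mul_conjTranspose_self]
    exact re_trace_mul_le hαβ hρ (posSemidef_self_mul_conjTranspose L)

/-- The sandwiched operator `σ^((1-α)/(2α)) ρ σ^((1-α)/(2α))`. -/
noncomputable def sandwich (α : ℝ) (ρ σ : Matrix n n ℂ) : Matrix n n ℂ :=
  mpow σ ((1 - α) / (2 * α)) * ρ * mpow σ ((1 - α) / (2 * α))

/-- The trace functional of the sandwiched Rényi divergence of order `α`, before normalisation by
`tr ρ`. -/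
noncomputable def sandwichedTrace (α : ℝ) (ρ σ : Matrix n n ℂ) : ℝ :=
  (mpow (sandwich α ρ σ) α).trace.re

theorem posSemidef_sandwich (α : ℝ) (hρ : ρ.PosSemidef) (σ : Matrix n n ℂ) :
    (sandwich α ρ σ).PosSemidef := by
  have h := hρ.mul_mul_conjTranspose_same (mpow σ ((1 - α) / (2 * α)))
  rwa [(isHermitian_mpow σ _).eq] at h

-- Substitute `L = σ^(1/(2β)) K` in `isGreatest_re_trace_mul_sub`; here `(1-α)/(2α) = -1/(2β)`.
theorem isGreatest_sandwichedTrace_div (hαβ : α.HolderConjugate β) (hρ : ρ.PosSemidef)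
    (hσ : σ.PosDef) :
    IsGreatest
      (range fun K : Matrix n n ℂ =>
        (ρ * (K * Kᴴ)).trace.re - (mpow (Kᴴ * mpow σ β⁻¹ * K) β).trace.re / β)
      (sandwichedTrace α ρ σ / α) := by
  have hexp : (1 - α) / (2 * α) = -(β⁻¹ / 2) := by
    rw [← hαβ.one_sub_inv]
    field_simp [hαβ.ne_zero]
    ring
  set S : Matrix n n ℂ := mpow σ (β⁻¹ / 2)
  set T : Matrix n n ℂ := mpow σ (-(β⁻¹ / 2))
  have hS : Sᴴ = S := isHermitian_mpow σ _
  have hST : S * T = 1 := mpow_mul_mpow_neg hσ _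
  have hTS : T * S = 1 := mul_eq_one_comm.1 hST
  have hSS : S * S = mpow σ β⁻¹ := by
    rw [mpow_mul_mpow hσ.posSemidef (by simpa using hαβ.symm.ne_zero), add_halves]
  have hsurj : Function.Surjective (S * ·) := fun K => ⟨T * K, by simp [← Matrix.mul_assoc, hST]⟩
  have h : IsGreatest _ (sandwichedTrace α ρ σ / α) :=
    isGreatest_re_trace_mul_sub hαβ (posSemidef_sandwich α hρ σ)
  rw [← hsurj.range_comp] at h
  convert h using 2
  funext K
  have htrace : (sandwich α ρ σ * (S * K * (S * K)ᴴ)).trace = (ρ * (K * Kᴴ)).trace := by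
    calc (sandwich α ρ σ * (S * K * (S * K)ᴴ)).trace
        = (T * (ρ * (T * S) * K * Kᴴ * S)).trace := by
          simp only [sandwich, hexp, conjTranspose_mul, hS, Matrix.mul_assoc, T]
      _ = (ρ * (T * S) * K * Kᴴ * (S * T)).trace := by
          rw [trace_mul_comm, Matrix.mul_assoc]
      _ = (ρ * (K * Kᴴ)).trace := by
          simp only [hTS, hST, Matrix.mul_one, Matrix.mul_assoc]
  have hgram : (S * K)ᴴ * (S * K) = Kᴴ * mpow σ β⁻¹ * K := by
    rw [conjTranspose_mul, hS, ← hSS]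
    simp only [Matrix.mul_assoc]
  simp only [Function.comp_apply, htrace, hgram]

theorem convexOn_sandwichedTrace (hα : 1 < α) :
    ConvexOn ℝ ({ρ : Matrix n n ℂ | ρ.PosSemidef} ×ˢ {σ : Matrix n n ℂ | σ.PosDef})
      fun p => sandwichedTrace α p.1 p.2 := by
  have hαβ : α.HolderConjugate α.conjExponent := .conjExponent hα
  set β : ℝ := α.conjExponent
  have hs : Convex ℝ ({ρ : Matrix n n ℂ | ρ.PosSemidef} ×ˢ {σ : Matrix n n ℂ | σ.PosDef}) :=
    convex_setOf_posSemidef.prod convex_setOf_posDef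
  have hdiv : ConvexOn ℝ ({ρ : Matrix n n ℂ | ρ.PosSemidef} ×ˢ {σ : Matrix n n ℂ | σ.PosDef})
      fun p => sandwichedTrace α p.1 p.2 / α := by
    refine convexOn_of_isLUB (fun K : Matrix n n ℂ => ?_) fun p hp =>
      (isGreatest_sandwichedTrace_div hαβ hp.1 hp.2).isLUB
    refine ConvexOn.sub ⟨hs, fun p _ p' _ a b _ _ _ => le_of_eq ?_⟩ ?_
    · simp [Matrix.add_mul, trace_add, trace_smul]
    · have h := ((concaveOn_re_trace_mpow_conj hαβ.symm K).smul
        (inv_nonneg.2 hαβ.symm.nonneg)).comp_linearMap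
          (LinearMap.snd ℝ (Matrix n n ℂ) (Matrix n n ℂ))
      refine (h.subset (fun p hp => hp.2.posSemidef) hs).congr fun p _ => ?_
      simp [div_eq_inv_mul]
  refine (hdiv.smul hαβ.nonneg).congr fun p _ => ?_
  exact mul_div_cancel₀ _ hαβ.ne_zero

end SandwichedTrace

theorem exp_D_jointly_convex_general {n : Type*} [Fintype n] [DecidableEq n] {α : ℝ} (hα1 : 1 < α)
    (hα2 : α ≤ 2) :
    ConvexOn ℝ ({ρ : Matrix n n ℂ | ρ.PosSemidef} ×ˢ {σ : Matrix n n ℂ | σ.PosDef})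
      fun p => sandwichedTrace α p.1 p.2 ^ (1 / (α - 1)) := by
  have hexp : 1 ≤ 1 / (α - 1) := (one_le_div (sub_pos.2 hα1)).2 (by linarith)
  exact convexOn_rpow_comp hexp (convexOn_sandwichedTrace hα1) fun p hp =>
    re_trace_mpow_nonneg (posSemidef_sandwich α hp.1 p.2) α

theorem exp_D_jointly_convex {n : ℕ} (α : ℝ) (hα1 : 1 < α) (hα2 : α ≤ 2)
    (ρ₀ ρ₁ σ₀ σ₁ : Matrix (Fin n) (Fin n) ℂ)
    (hρ₀ : ρ₀.PosDef) (hρ₁ : ρ₁.PosDef) (hσ₀ : σ₀.PosDef) (hσ₁ : σ₁.PosDef)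
    (t : ℝ) (ht : 0 < t) (htr₀ : ρ₀.trace = (t : ℂ)) (htr₁ : ρ₁.trace = (t : ℂ))
    (s : ℝ) (hs0 : 0 ≤ s) (hs1 : s ≤ 1) :
    (fun (ρ σ : Matrix (Fin n) (Fin n) ℂ) =>
      ((mpow (mpow σ ((1 - α) / (2 * α)) * ρ * mpow σ ((1 - α) / (2 * α))) α).trace.re ^ (1 / (α - 1) : ℝ)))
        (((1 - s : ℝ) : ℂ) • ρ₀ + ((s : ℝ) : ℂ) • ρ₁)
        (((1 - s : ℝ) : ℂ) • σ₀ + ((s : ℝ) : ℂ) • σ₁) ≤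
      (1 - s) * (fun (ρ σ : Matrix (Fin n) (Fin n) ℂ) =>
      ((mpow (mpow σ ((1 - α) / (2 * α)) * ρ * mpow σ ((1 - α) / (2 * α))) α).trace.re ^ (1 / (α - 1) : ℝ))) ρ₀ σ₀ + s * (fun (ρ σ : Matrix (Fin n) (Fin n) ℂ) =>
      ((mpow (mpow σ ((1 - α) / (2 * α)) * ρ * mpow σ ((1 - α) / (2 * α))) α).trace.re ^ (1 / (α - 1) : ℝ))) ρ₁ σ₁ := by
  simp only [Complex.coe_smul]
  exact (exp_D_jointly_convex_general hα1 hα2).2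
    (x := (ρ₀, σ₀)) (y := (ρ₁, σ₁)) ⟨hρ₀.posSemidef, hσ₀⟩ ⟨hρ₁.posSemidef, hσ₁⟩
    (sub_nonneg.2 hs1) hs0 (sub_add_cancel 1 s)
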